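/- If π_A, π_B are duplicate-free lists and i ∈ entries(π_A) ∩ entries(π_B), then π_A ⊕ π_B ⊆ π_A ⊕ (π_B.erase i): removing from the consequent an item that also occurs in the antecedent can only enlarge the set of rankings consistent with the rule. -/

import Mathlib

/-!
Restricting a duplicate-free list `m` to the entries of `π` returns `π` exactly when `π` is a
sublist of `m`. Consistent combinations are therefore duplicate-free common superlists with no
further entries, and they stay so when the two rankings are replaced by sublists whose entries have
the same union. Erasing `i` from `πB` keeps the union because `i` still occurs in `πA`.
-/

open scoped Classical

/-- `oplus πA πB` is the set of consistent combinations of `πA` and `πB`. -/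
def oplus {α : Type*} [DecidableEq α] (πA πB : List α) : Set (List α) :=
  {m | m.Nodup ∧ (∀ x, x ∈ m ↔ x ∈ πA ∨ x ∈ πB) ∧
    m.filter (fun x => decide (x ∈ πA)) = πA ∧
    m.filter (fun x => decide (x ∈ πB)) = πB}

section

variable {α : Type*} [DecidableEq α]

theorem filter_mem_eq_iff_sublist {l m : List α} (hm : m.Nodup) :
    m.filter (fun x => decide (x ∈ l)) = l ↔ l.Sublist m := by
  refine ⟨fun h => h ▸ List.filter_sublist, fun h => ?_⟩
  have hself : l.filter (fun x => decide (x ∈ l)) = l :=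
    List.filter_eq_self.mpr fun _ hx => decide_eq_true hx
  have hsub : l.Sublist (m.filter fun x => decide (x ∈ l)) := by
    simpa only [hself] using h.filter fun x => decide (x ∈ l)
  have hsubperm : (m.filter fun x => decide (x ∈ l)).Subperm l :=
    (hm.filter _).subperm fun _ hx => by simpa using List.of_mem_filter hx
  exact (hsub.eq_of_length_le hsubperm.length_le).symm

theorem mem_or_mem_erase_of_mem {l l' : List α} {i x : α} (hi : i ∈ l)
    (hx : x ∈ l ∨ x ∈ l') : x ∈ l ∨ x ∈ l'.erase i := by
  by_cases hxi : x = i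
  · exact .inl (hxi ▸ hi)
  · exact hx.imp_right (List.mem_erase_of_ne hxi).mpr

theorem mem_oplus_iff_sublist {πA πB m : List α} :
    m ∈ oplus πA πB ↔
      m.Nodup ∧ (∀ x, x ∈ m ↔ x ∈ πA ∨ x ∈ πB) ∧ πA.Sublist m ∧ πB.Sublist m :=
  and_congr_right fun hm =>
    and_congr_right' (and_congr (filter_mem_eq_iff_sublist hm) (filter_mem_eq_iff_sublist hm))

theorem oplus_subset_oplus_erase_general {πA πA' πB πB' : List α}
    (hA : πA'.Sublist πA) (hB : πB'.Sublist πB)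
    (hcover : ∀ x, x ∈ πA ∨ x ∈ πB → x ∈ πA' ∨ x ∈ πB') :
    oplus πA πB ⊆ oplus πA' πB' := by
  intro m hm
  obtain ⟨hnodup, hmem, hAm, hBm⟩ := mem_oplus_iff_sublist.mp hm
  have hunion (x : α) : x ∈ πA ∨ x ∈ πB ↔ x ∈ πA' ∨ x ∈ πB' :=
    ⟨hcover x, Or.imp (hA.mem ·) (hB.mem ·)⟩
  exact mem_oplus_iff_sublist.mpr
    ⟨hnodup, fun x => (hmem x).trans (hunion x), hA.trans hAm, hB.trans hBm⟩

end

/-- removing from the consequent an item that also occurs in the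
antecedent can only enlarge the set of rankings consistent with the rule. -/
theorem oplus_subset_oplus_erase {α : Type*} [Fintype α] [DecidableEq α]
    (πA πB : List α) (hA : πA.Nodup) (hB : πB.Nodup)
    (i : α) (hiA : i ∈ πA) (hiB : i ∈ πB) :
    oplus πA πB ⊆ oplus πA (πB.erase i) :=
  oplus_subset_oplus_erase_general (.refl πA) List.erase_sublist
    fun _ hx => mem_or_mem_erase_of_mem hiA hx
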